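/- Let $k$ be a commutative ring, let $R,S$ be associative unital $k$-algebras and let $(R,S,P,Q,\varphi,\psi)$ be a Morita context over $k$: $P$ is an $(S,R)$-bimodule and $Q$ an $(R,S)$-bimodule (both with symmetric $k$-action), $\varphi : P\otimes_R Q\to S$ is an isomorphism of $(S,S)$-bimodules and $\psi : Q\otimes_S P\to R$ an isomorphism of $(R,R)$-bimodules, such that $\varphi(p\otimes q)\,p'=p\,\psi(q\otimes p')$ and $\psi(q\otimes p)\,q'=q\,\varphi(p\otimes q')$ for all $p,p'\in P$, $q,q'\in Q$. Fix finite families $(p'_j)_j$ in $P$ and $(q'_j)_j$ in $Q$ with $\sum_j\varphi(p'_j\otimes q'_j)=1_S$. Write $R^e:=R\otimes_k R^{op}$ and $S^e:=S\otimes_k S^{op}$. Let $P^e:=P\otimes_k Q$, a right $R^e$-module via $(p\otimes q)\cdot(r\otimes\tilde r^{op}):=(p r)\otimes(\tilde r q)$, and let $Q^e:=Q\otimes_k P$, a left $R^e$-module via $(r\otimes\tilde r^{op})\cdot(q\otimes p):=(r q)\otimes(p\tilde r)$. Let $U$ be a $k$-algebra and $\eta : R^e\to U$ a homomorphism of $k$-algebras;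 regard $U$ as an $(R^e,R^e)$-bimodule by left and right multiplication through $\eta$, and set $\tilde U:=P^e\otimes_{R^e}U\otimes_{R^e}Q^e$. Then the formula $$\big((a_1\otimes b_1)\otimes u\otimes(c_1\otimes d_1)\big)\cdot\big((a_2\otimes b_2)\otimes v\otimes(c_2\otimes d_2)\big):=(a_1\otimes b_1)\otimes\Big[\big(u\,\eta(\psi(c_1\otimes a_2)\otimes 1)\big)\big(\eta(1\otimes\psi(b_2\otimes d_1)^{op})\,v\big)\Big]\otimes(c_2\otimes d_2)$$ (for $a_1,a_2,d_1,d_2\in P$, $b_1,b_2,c_1,c_2\in Q$, $u,v\in U$) gives a well-defined, $k$-bilinear, associative multiplication on $\tilde U$ with unit $\sum_{i,j}(p'_j\otimes q'_i)\otimes 1_U\otimes(q'_j\otimes p'_i)$, and the map $$\tilde\eta : S^e\to\tilde U,\qquad s\otimes\tilde s^{op}\mapsto\sum_{i,j}(s p'_j\otimes q'_i)\otimes 1_U\otimes(q'_j\otimes\tilde s p'_i),$$ is well defined and a homomorphism of $k$-algebras; in particular the Morita base change $\tilde U$ is an $S^e$-ring. -/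

import Mathlib

open scoped TensorProduct
open MulOpposite

/-- The `k`-submodule of balancing relations `(m·a) ⊗ n − m ⊗ (a·n)` inside `M ⊗[k] N`,
for a `k`-algebra `A`, a right `A`-module `M` (a module over `Aᵐᵒᵖ`) and a left `A`-module `N`. -/
def midRel (k A M N : Type*) [CommRing k] [Ring A] [Algebra k A]
    [AddCommGroup M] [Module k M] [Module Aᵐᵒᵖ M]
    [AddCommGroup N] [Module k N] [Module A N] :
    Submodule k (M ⊗[k] N) :=
  Submodule.span k {x | ∃ (m : M) (a : A) (n : N),
    x = (op a • m) ⊗ₜ[k] n - m ⊗ₜ[k] (a • n)}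

/-- The balanced tensor product `M ⊗_A N` over a possibly noncommutative `k`-algebra `A`, as the
quotient of `M ⊗[k] N` by the balancing relations. -/
abbrev BalTensor (k A M N : Type*) [CommRing k] [Ring A] [Algebra k A]
    [AddCommGroup M] [Module k M] [Module Aᵐᵒᵖ M]
    [AddCommGroup N] [Module k N] [Module A N] :=
  (M ⊗[k] N) ⧸ midRel k A M N

/-- The class of `m ⊗ n` in `M ⊗_A N`. -/
def BalTensor.tmul (k A : Type*) {M N : Type*} [CommRing k] [Ring A] [Algebra k A]
    [AddCommGroup M] [Module k M] [Module Aᵐᵒᵖ M]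
    [AddCommGroup N] [Module k N] [Module A N] (m : M) (n : N) : BalTensor k A M N :=
  Submodule.Quotient.mk (m ⊗ₜ[k] n)

/-- A Morita context `(R, S, P, Q, φ, ψ)` over the commutative ground ring `k`:
`P` is an `(S,R)`-bimodule and `Q` an `(R,S)`-bimodule (both with symmetric `k`-action, right
actions being encoded as left actions of the opposite algebras), `φ : P ⊗_R Q ≃ S` is an
isomorphism of `(S,S)`-bimodules and `ψ : Q ⊗_S P ≃ R` an isomorphism of `(R,R)`-bimodules
(bilinearity is stated on the classes `p ⊗ q` and `q ⊗ p`, which generate), and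
`φ(p ⊗ q)·p' = p·ψ(q ⊗ p')`, `ψ(q ⊗ p)·q' = q·φ(p ⊗ q')`. -/
structure MoritaContext (k R S P Q : Type*) [CommRing k] [Ring R] [Ring S]
    [Algebra k R] [Algebra k S]
    [AddCommGroup P] [Module k P] [Module S P] [Module Rᵐᵒᵖ P]
    [SMulCommClass S Rᵐᵒᵖ P] [IsScalarTower k S P] [IsScalarTower k Rᵐᵒᵖ P]
    [AddCommGroup Q] [Module k Q] [Module R Q] [Module Sᵐᵒᵖ Q]
    [SMulCommClass R Sᵐᵒᵖ Q] [IsScalarTower k R Q] [IsScalarTower k Sᵐᵒᵖ Q] where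
  φ : BalTensor k R P Q ≃ₗ[k] S
  ψ : BalTensor k S Q P ≃ₗ[k] R
  φ_left : ∀ (s : S) (p : P) (q : Q),
    φ (BalTensor.tmul k R (s • p) q) = s * φ (BalTensor.tmul k R p q)
  φ_right : ∀ (s : S) (p : P) (q : Q),
    φ (BalTensor.tmul k R p (op s • q)) = φ (BalTensor.tmul k R p q) * s
  ψ_left : ∀ (r : R) (q : Q) (p : P),
    ψ (BalTensor.tmul k S (r • q) p) = r * ψ (BalTensor.tmul k S q p)
  ψ_right : ∀ (r : R) (q : Q) (p : P),
    ψ (BalTensor.tmul k S q (op r • p)) = ψ (BalTensor.tmul k S q p) * r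
  assoc_φψ : ∀ (p : P) (q : Q) (p' : P),
    φ (BalTensor.tmul k R p q) • p' = op (ψ (BalTensor.tmul k S q p')) • p
  assoc_ψφ : ∀ (q : Q) (p : P) (q' : Q),
    ψ (BalTensor.tmul k S q p) • q' = op (φ (BalTensor.tmul k R p q')) • q

section MoritaBaseChange

/-- The balancing relations over `R^e = R ⊗_k R^op` in `P^e ⊗_k U ⊗_k Q^e`, where the `k`-modules
underlying `P^e` and `Q^e` are `P ⊗[k] Q` and `Q ⊗[k] P`.  Here `R^e` acts on `U` on both sides
through `η`, on the right of `P^e` by `(p ⊗ q)·(r ⊗ r'^op) = (p·r) ⊗ (r'·q)`, and on the left of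
`Q^e` by `(r ⊗ r'^op)·(c ⊗ d) = (r·c) ⊗ (d·r')`. -/
def UBaseRel (k R U P Q : Type*) [CommRing k] [Ring R] [Algebra k R] [Ring U] [Algebra k U]
    [AddCommGroup P] [Module k P] [Module Rᵐᵒᵖ P]
    [AddCommGroup Q] [Module k Q] [Module R Q] (η : R ⊗[k] Rᵐᵒᵖ →ₐ[k] U) :
    Submodule k ((P ⊗[k] Q) ⊗[k] (U ⊗[k] (Q ⊗[k] P))) :=
  Submodule.span k
    ({z | ∃ (r r' : R) (p : P) (q : Q) (u : U) (c : Q) (d : P),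
        z = ((op r • p) ⊗ₜ[k] (r' • q)) ⊗ₜ[k] (u ⊗ₜ[k] (c ⊗ₜ[k] d))
          - (p ⊗ₜ[k] q) ⊗ₜ[k] ((η (r ⊗ₜ[k] op r') * u) ⊗ₜ[k] (c ⊗ₜ[k] d))} ∪
     {z | ∃ (r r' : R) (p : P) (q : Q) (u : U) (c : Q) (d : P),
        z = (p ⊗ₜ[k] q) ⊗ₜ[k] ((u * η (r ⊗ₜ[k] op r')) ⊗ₜ[k] (c ⊗ₜ[k] d))
          - (p ⊗ₜ[k] q) ⊗ₜ[k] (u ⊗ₜ[k] ((r • c) ⊗ₜ[k] (op r' • d)))})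

variable {k R U : Type*} [CommRing k] [Ring R] [Algebra k R] [Ring U] [Algebra k U]

/-- The `k`-module `Ũ = P^e ⊗_{R^e} U ⊗_{R^e} Q^e`. -/
abbrev UTilde (η : R ⊗[k] Rᵐᵒᵖ →ₐ[k] U) (P Q : Type*)
    [AddCommGroup P] [Module k P] [Module Rᵐᵒᵖ P]
    [AddCommGroup Q] [Module k Q] [Module R Q] :=
  ((P ⊗[k] Q) ⊗[k] (U ⊗[k] (Q ⊗[k] P))) ⧸ UBaseRel k R U P Q η

/-- The class of `(a ⊗ b) ⊗ u ⊗ (c ⊗ d)` in `Ũ`. -/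
def UTilde.mk (η : R ⊗[k] Rᵐᵒᵖ →ₐ[k] U) {P Q : Type*}
    [AddCommGroup P] [Module k P] [Module Rᵐᵒᵖ P]
    [AddCommGroup Q] [Module k Q] [Module R Q]
    (a : P) (b : Q) (u : U) (c : Q) (d : P) : UTilde η P Q :=
  Submodule.Quotient.mk ((a ⊗ₜ[k] b) ⊗ₜ[k] (u ⊗ₜ[k] (c ⊗ₜ[k] d)))

variable {S P Q : Type*} [Ring S] [Algebra k S]
    [AddCommGroup P] [Module k P] [Module S P] [Module Rᵐᵒᵖ P]
    [SMulCommClass S Rᵐᵒᵖ P] [IsScalarTower k S P] [IsScalarTower k Rᵐᵒᵖ P]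
    [AddCommGroup Q] [Module k Q] [Module R Q] [Module Sᵐᵒᵖ Q]
    [SMulCommClass R Sᵐᵒᵖ Q] [IsScalarTower k R Q] [IsScalarTower k Sᵐᵒᵖ Q]

/-- A `k`-bilinear operation on `Ũ` is given on generators by
`((a₁ ⊗ b₁) ⊗ u ⊗ (c₁ ⊗ d₁)) · ((a₂ ⊗ b₂) ⊗ v ⊗ (c₂ ⊗ d₂))
  = (a₁ ⊗ b₁) ⊗ [(u·η(ψ(c₁ ⊗ a₂) ⊗ 1)) · (η(1 ⊗ ψ(b₂ ⊗ d₁)^op)·v)] ⊗ (c₂ ⊗ d₂)`. -/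
def IsBaseChangeMul (ctx : MoritaContext k R S P Q) (η : R ⊗[k] Rᵐᵒᵖ →ₐ[k] U)
    (mul : UTilde η P Q →ₗ[k] UTilde η P Q →ₗ[k] UTilde η P Q) : Prop :=
  ∀ (a₁ : P) (b₁ : Q) (u : U) (c₁ : Q) (d₁ : P)
    (a₂ : P) (b₂ : Q) (v : U) (c₂ : Q) (d₂ : P),
    mul (UTilde.mk η a₁ b₁ u c₁ d₁) (UTilde.mk η a₂ b₂ v c₂ d₂) =
      UTilde.mk η a₁ b₁
        ((u * η (ctx.ψ (BalTensor.tmul k S c₁ a₂) ⊗ₜ[k] (1 : Rᵐᵒᵖ))) *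
          (η ((1 : R) ⊗ₜ[k] op (ctx.ψ (BalTensor.tmul k S b₂ d₁))) * v))
        c₂ d₂

end MoritaBaseChange

section MoritaBaseChangeProof

variable {k R U P Q : Type*} [CommRing k] [Ring R] [Algebra k R] [Ring U] [Algebra k U]
    [AddCommGroup P] [Module k P] [Module Rᵐᵒᵖ P] [AddCommGroup Q] [Module k Q] [Module R Q]

namespace UTilde

/-- Elements of `Ũ` are sums of the classes `(a ⊗ b) ⊗ u ⊗ (c ⊗ d)`. -/
theorem induction_on {η : R ⊗[k] Rᵐᵒᵖ →ₐ[k] U} {motive : UTilde η P Q → Prop}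
    (x : UTilde η P Q) (zero : motive 0)
    (mk : ∀ a b u c d, motive (UTilde.mk η a b u c d))
    (add : ∀ x y, motive x → motive y → motive (x + y)) : motive x := by
  obtain ⟨t, rfl⟩ := Submodule.Quotient.mk_surjective _ x
  induction t with
  | zero => exact zero
  | add x y hx hy => exact add _ _ hx hy
  | tmul w y =>
    induction w with
    | zero => rw [TensorProduct.zero_tmul]; exact zero
    | add w₁ w₂ h₁ h₂ => rw [TensorProduct.add_tmul]; exact add _ _ h₁ h₂
    | tmul a b =>
      induction y with
      | zero => rw [TensorProduct.tmul_zero]; exact zero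
      | add y₁ y₂ h₁ h₂ => rw [TensorProduct.tmul_add]; exact add _ _ h₁ h₂
      | tmul u e =>
        induction e with
        | zero => rw [TensorProduct.tmul_zero, TensorProduct.tmul_zero]; exact zero
        | add e₁ e₂ h₁ h₂ =>
          rw [TensorProduct.tmul_add, TensorProduct.tmul_add]; exact add _ _ h₁ h₂
        | tmul c d => exact mk a b u c d

/-- The balancing relation of `Ũ` on the left of `U`. -/
theorem mk_smul_left (η : R ⊗[k] Rᵐᵒᵖ →ₐ[k] U) (r r' : R) (a : P) (b : Q) (u : U) (c : Q)
    (d : P) : mk η (op r • a) (r' • b) u c d = mk η a b (η (r ⊗ₜ[k] op r') * u) c d :=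
  (Submodule.Quotient.eq _).2 (Submodule.subset_span (Or.inl ⟨r, r', a, b, u, c, d, rfl⟩))

/-- The balancing relation of `Ũ` on the right of `U`. -/
theorem mk_smul_right (η : R ⊗[k] Rᵐᵒᵖ →ₐ[k] U) (r r' : R) (a : P) (b : Q) (u : U) (c : Q)
    (d : P) : mk η a b u (r • c) (op r' • d) = mk η a b (u * η (r ⊗ₜ[k] op r')) c d :=
  Eq.symm <|
    (Submodule.Quotient.eq _).2 (Submodule.subset_span (Or.inr ⟨r, r', a, b, u, c, d, rfl⟩))

/-- The class `(a ⊗ b) ⊗ u ⊗ (c ⊗ d)` as a bilinear function of `a` and `b`. -/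
def mkOuter (η : R ⊗[k] Rᵐᵒᵖ →ₐ[k] U) (u : U) (c : Q) (d : P) : P →ₗ[k] Q →ₗ[k] UTilde η P Q :=
  (TensorProduct.mk k P Q).compr₂
    ((UBaseRel k R U P Q η).mkQ ∘ₗ (TensorProduct.mk k _ _).flip (u ⊗ₜ[k] (c ⊗ₜ[k] d)))

/-- The class `(a ⊗ b) ⊗ u ⊗ (c ⊗ d)` as a bilinear function of `c` and `d`. -/
def mkInner (η : R ⊗[k] Rᵐᵒᵖ →ₐ[k] U) (a : P) (b : Q) (u : U) : Q →ₗ[k] P →ₗ[k] UTilde η P Q :=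
  (TensorProduct.mk k Q P).compr₂
    ((UBaseRel k R U P Q η).mkQ ∘ₗ TensorProduct.mk k _ _ (a ⊗ₜ[k] b) ∘ₗ TensorProduct.mk k _ _ u)

theorem mkOuter_apply (η : R ⊗[k] Rᵐᵒᵖ →ₐ[k] U) (u : U) (c : Q) (d : P) (a : P) (b : Q) :
    mkOuter η u c d a b = mk η a b u c d := rfl

theorem mkInner_apply (η : R ⊗[k] Rᵐᵒᵖ →ₐ[k] U) (u : U) (c : Q) (d : P) (a : P) (b : Q) :
    mkInner η a b u c d = mk η a b u c d := rfl

/-- The class `(a ⊗ b) ⊗ u ⊗ (c ⊗ d)` as a bilinear function of `a` and `d`. -/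
def mkMid (η : R ⊗[k] Rᵐᵒᵖ →ₐ[k] U) (b : Q) (u : U) (c : Q) : P →ₗ[k] P →ₗ[k] UTilde η P Q :=
  LinearMap.mk₂ k (fun a d => mk η a b u c d)
    (fun _ _ _ => by simp only [← mkOuter_apply, map_add, LinearMap.add_apply])
    (fun _ _ _ => by simp only [← mkOuter_apply, map_smul, LinearMap.smul_apply])
    (fun _ _ _ => by simp only [← mkInner_apply, map_add])
    (fun _ _ _ => by simp only [← mkInner_apply, map_smul])

theorem mkMid_apply (η : R ⊗[k] Rᵐᵒᵖ →ₐ[k] U) (u : U) (c : Q) (d : P) (a : P) (b : Q) :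
    mkMid η b u c a d = mk η a b u c d := rfl

theorem sum_mk_outer (η : R ⊗[k] Rᵐᵒᵖ →ₐ[k] U) {ι κ : Type*} [Fintype ι] [Fintype κ]
    (a : κ → P) (b : ι → Q) (u : U) (c : Q) (d : P) :
    ∑ i, ∑ j, mk η (a j) (b i) u c d = mk η (∑ j, a j) (∑ i, b i) u c d := by
  simp only [← mkOuter_apply, map_sum, LinearMap.sum_apply]

theorem sum_mk_inner (η : R ⊗[k] Rᵐᵒᵖ →ₐ[k] U) {ι κ : Type*} [Fintype ι] [Fintype κ]
    (a : P) (b : Q) (u : U) (c : κ → Q) (d : ι → P) :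
    ∑ i, ∑ j, mk η a b u (c j) (d i) = mk η a b u (∑ j, c j) (∑ i, d i) := by
  simp only [← mkInner_apply, map_sum, LinearMap.sum_apply]

theorem sum_mk_mid (η : R ⊗[k] Rᵐᵒᵖ →ₐ[k] U) {ι κ : Type*} [Fintype ι] [Fintype κ]
    (a : κ → P) (b : Q) (u : U) (c : Q) (d : ι → P) :
    ∑ i, ∑ j, mk η (a j) b u c (d i) = mk η (∑ j, a j) b u c (∑ i, d i) := by
  simp only [← mkMid_apply, map_sum, LinearMap.sum_apply]

end UTilde

variable {S : Type*} [Ring S] [Algebra k S] [Module S P] [IsScalarTower k S P]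
  {κ : Type*} [Fintype κ]

/-- `η̃ : S^e → Ũ`, `s ⊗ s'^op ↦ ∑ (s·p'ⱼ ⊗ q'ᵢ) ⊗ 1 ⊗ (q'ⱼ ⊗ s'·p'ᵢ)`. -/
def baseChangeUnit (η : R ⊗[k] Rᵐᵒᵖ →ₐ[k] U) (p' : κ → P) (q' : κ → Q) :
    S ⊗[k] Sᵐᵒᵖ →ₗ[k] UTilde η P Q :=
  TensorProduct.lift <| ∑ i, ∑ j, (UTilde.mkMid η (q' i) 1 (q' j)).compl₁₂
    ((LinearMap.toSpanSingleton S P (p' j)).restrictScalars k)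
    ((LinearMap.toSpanSingleton S P (p' i)).restrictScalars k ∘ₗ
      (opLinearEquiv k).symm.toLinearMap)

theorem baseChangeUnit_tmul (η : R ⊗[k] Rᵐᵒᵖ →ₐ[k] U) (p' : κ → P) (q' : κ → Q) (s s' : S) :
    baseChangeUnit η p' q' (s ⊗ₜ[k] op s') =
      ∑ i, ∑ j, UTilde.mk η (s • p' j) (q' i) 1 (q' j) (s' • p' i) := by
  simp [baseChangeUnit, LinearMap.sum_apply, UTilde.mkMid_apply]

variable [SMulCommClass S Rᵐᵒᵖ P] [IsScalarTower k Rᵐᵒᵖ P] [Module Sᵐᵒᵖ Q]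
  [SMulCommClass R Sᵐᵒᵖ Q] [IsScalarTower k R Q] [IsScalarTower k Sᵐᵒᵖ Q]

namespace MoritaContext

variable (ctx : MoritaContext k R S P Q) {p' : κ → P} {q' : κ → Q}

theorem sum_op_ψ_smul (h1 : ∑ j, ctx.φ (BalTensor.tmul k R (p' j) (q' j)) = 1) (p : P) :
    ∑ j, op (ctx.ψ (BalTensor.tmul k S (q' j) p)) • p' j = p := by
  simp only [← ctx.assoc_φψ, ← Finset.sum_smul, h1, one_smul]

theorem sum_ψ_smul (h1 : ∑ j, ctx.φ (BalTensor.tmul k R (p' j) (q' j)) = 1) (q : Q) :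
    ∑ j, ctx.ψ (BalTensor.tmul k S q (p' j)) • q' j = q := by
  simp only [ctx.assoc_ψφ, ← Finset.sum_smul, ← Finset.op_sum, h1, op_one, one_smul]

/-- `(c ⊗ d, a ⊗ b) ↦ η(ψ(c ⊗ a) ⊗ ψ(b ⊗ d)^op)`. -/
def pairing (η : R ⊗[k] Rᵐᵒᵖ →ₐ[k] U) : (Q ⊗[k] P) →ₗ[k] (P ⊗[k] Q) →ₗ[k] U :=
  TensorProduct.curry (η.toLinearMap ∘ₗ
    TensorProduct.map (ctx.ψ.toLinearMap ∘ₗ (midRel k S Q P).mkQ)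
      ((opLinearEquiv k).toLinearMap ∘ₗ ctx.ψ.toLinearMap ∘ₗ (midRel k S Q P).mkQ ∘ₗ
        (TensorProduct.comm k P Q).toLinearMap) ∘ₗ
    (TensorProduct.tensorTensorTensorComm k Q P P Q).toLinearMap)

theorem pairing_tmul (η : R ⊗[k] Rᵐᵒᵖ →ₐ[k] U) (c : Q) (d a : P) (b : Q) :
    ctx.pairing η (c ⊗ₜ d) (a ⊗ₜ b) =
      η (ctx.ψ (BalTensor.tmul k S c a) ⊗ₜ[k] op (ctx.ψ (BalTensor.tmul k S b d))) := rfl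

theorem pairing_smul_left (η : R ⊗[k] Rᵐᵒᵖ →ₐ[k] U) (r r' : R) (c : Q) (d a : P) (b : Q) :
    ctx.pairing η ((r • c) ⊗ₜ (op r' • d)) (a ⊗ₜ b) =
      η (r ⊗ₜ[k] op r') * ctx.pairing η (c ⊗ₜ d) (a ⊗ₜ b) := by
  simp only [pairing_tmul, ctx.ψ_left, ctx.ψ_right, ← map_mul,
    Algebra.TensorProduct.tmul_mul_tmul, op_mul]

theorem pairing_smul_right (η : R ⊗[k] Rᵐᵒᵖ →ₐ[k] U) (r r' : R) (c : Q) (d a : P) (b : Q) :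
    ctx.pairing η (c ⊗ₜ d) ((op r • a) ⊗ₜ (r' • b)) =
      ctx.pairing η (c ⊗ₜ d) (a ⊗ₜ b) * η (r ⊗ₜ[k] op r') := by
  simp only [pairing_tmul, ctx.ψ_left, ctx.ψ_right, ← map_mul,
    Algebra.TensorProduct.tmul_mul_tmul, op_mul]

/-- `(u ⊗ e, w ⊗ (v ⊗ e')) ↦ (u·⟨e, w⟩·v) ⊗ e'`, with `⟨e, w⟩` the pairing induced by `ψ`. -/
def contract (η : R ⊗[k] Rᵐᵒᵖ →ₐ[k] U) :
    (U ⊗[k] (Q ⊗[k] P)) →ₗ[k] ((P ⊗[k] Q) ⊗[k] (U ⊗[k] (Q ⊗[k] P))) →ₗ[k]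
      U ⊗[k] (Q ⊗[k] P) :=
  TensorProduct.lift <| LinearMap.mk₂ k
    (fun u e => TensorProduct.lift
      (LinearMap.rTensorHom (Q ⊗[k] P) ∘ₗ LinearMap.mul k U ∘ₗ LinearMap.mulLeft k u ∘ₗ
        ctx.pairing η e))
    (fun _ _ _ => TensorProduct.ext' fun _ _ => by simp [add_mul])
    (fun _ _ _ => TensorProduct.ext' fun _ _ => by simp)
    (fun _ _ _ => TensorProduct.ext' fun _ _ => by simp [mul_add])
    (fun _ _ _ => TensorProduct.ext' fun _ _ => by simp)

/-- The multiplication of `Ũ` before passing to balanced tensors. -/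
def preMul (η : R ⊗[k] Rᵐᵒᵖ →ₐ[k] U) :
    ((P ⊗[k] Q) ⊗[k] (U ⊗[k] (Q ⊗[k] P))) →ₗ[k]
      ((P ⊗[k] Q) ⊗[k] (U ⊗[k] (Q ⊗[k] P))) →ₗ[k] UTilde η P Q :=
  TensorProduct.lift <| LinearMap.mk₂ k
    (fun w x => (UBaseRel k R U P Q η).mkQ ∘ₗ TensorProduct.mk k _ _ w ∘ₗ ctx.contract η x)
    (fun _ _ _ => by simp only [map_add, LinearMap.add_comp, LinearMap.comp_add])
    (fun _ _ _ => by simp only [map_smul, LinearMap.smul_comp, LinearMap.comp_smul])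
    (fun _ _ _ => by simp only [map_add, LinearMap.comp_add])
    (fun _ _ _ => by simp only [map_smul, LinearMap.comp_smul])

theorem preMul_tmul (η : R ⊗[k] Rᵐᵒᵖ →ₐ[k] U) (a₁ : P) (b₁ : Q) (u : U) (c₁ : Q) (d₁ : P)
    (a₂ : P) (b₂ : Q) (v : U) (c₂ : Q) (d₂ : P) :
    ctx.preMul η ((a₁ ⊗ₜ b₁) ⊗ₜ (u ⊗ₜ (c₁ ⊗ₜ d₁))) ((a₂ ⊗ₜ b₂) ⊗ₜ (v ⊗ₜ (c₂ ⊗ₜ d₂))) =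
      UTilde.mk η a₁ b₁ (u * ctx.pairing η (c₁ ⊗ₜ d₁) (a₂ ⊗ₜ b₂) * v) c₂ d₂ := rfl

theorem UBaseRel_le_ker_preMul_flip (η : R ⊗[k] Rᵐᵒᵖ →ₐ[k] U) :
    UBaseRel k R U P Q η ≤ LinearMap.ker (ctx.preMul η).flip := by
  refine Submodule.span_le.2 ?_
  rintro _ (⟨r, r', p, q, u, c, d, rfl⟩ | ⟨r, r', p, q, u, c, d, rfl⟩) <;>
    rw [SetLike.mem_coe, LinearMap.mem_ker, map_sub, sub_eq_zero] <;>
    ext a₁ b₁ v c₁ d₁ <;>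
    simp only [TensorProduct.AlgebraTensorModule.curry_apply, TensorProduct.curry_apply,
      LinearMap.restrictScalars_self, LinearMap.flip_apply, preMul_tmul]
  · rw [pairing_smul_right]; simp only [mul_assoc]
  · rw [UTilde.mk_smul_right]; simp only [mul_assoc]

/-- The multiplication of `Ũ`. -/
def baseChangeMul (η : R ⊗[k] Rᵐᵒᵖ →ₐ[k] U) :
    UTilde η P Q →ₗ[k] UTilde η P Q →ₗ[k] UTilde η P Q :=
  (UBaseRel k R U P Q η).liftQ
    ((UBaseRel k R U P Q η).liftQ (ctx.preMul η).flip
      (ctx.UBaseRel_le_ker_preMul_flip η)).flip <| by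
    refine Submodule.span_le.2 ?_
    rintro _ (⟨r, r', p, q, u, c, d, rfl⟩ | ⟨r, r', p, q, u, c, d, rfl⟩) <;>
      rw [SetLike.mem_coe, LinearMap.mem_ker, map_sub, sub_eq_zero] <;>
      ext a₁ b₁ v c₁ d₁ <;>
      simp only [TensorProduct.AlgebraTensorModule.curry_apply, TensorProduct.curry_apply,
        LinearMap.restrictScalars_self, LinearMap.flip_apply, LinearMap.comp_apply,
        Submodule.mkQ_apply, Submodule.liftQ_apply, preMul_tmul]
    · rw [UTilde.mk_smul_left]; simp only [mul_assoc]
    · rw [pairing_smul_left]; simp only [mul_assoc]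

theorem baseChangeMul_mk (η : R ⊗[k] Rᵐᵒᵖ →ₐ[k] U) (a₁ : P) (b₁ : Q) (u : U) (c₁ : Q) (d₁ : P)
    (a₂ : P) (b₂ : Q) (v : U) (c₂ : Q) (d₂ : P) :
    ctx.baseChangeMul η (UTilde.mk η a₁ b₁ u c₁ d₁) (UTilde.mk η a₂ b₂ v c₂ d₂) =
      UTilde.mk η a₁ b₁ (u * ctx.pairing η (c₁ ⊗ₜ d₁) (a₂ ⊗ₜ b₂) * v) c₂ d₂ := rfl

theorem η_mul_η (η : R ⊗[k] Rᵐᵒᵖ →ₐ[k] U) (r r' : R) :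
    η (r ⊗ₜ[k] (1 : Rᵐᵒᵖ)) * η ((1 : R) ⊗ₜ[k] op r') = η (r ⊗ₜ[k] op r') := by
  rw [← map_mul, Algebra.TensorProduct.tmul_mul_tmul, mul_one, one_mul]

theorem isBaseChangeMul_baseChangeMul (η : R ⊗[k] Rᵐᵒᵖ →ₐ[k] U) :
    IsBaseChangeMul ctx η (ctx.baseChangeMul η) := by
  intro a₁ b₁ u c₁ d₁ a₂ b₂ v c₂ d₂
  rw [baseChangeMul_mk, pairing_tmul, ← η_mul_η]
  simp only [mul_assoc]

end MoritaContext

namespace IsBaseChangeMul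

variable {ctx : MoritaContext k R S P Q} {η : R ⊗[k] Rᵐᵒᵖ →ₐ[k] U}
  {mul : UTilde η P Q →ₗ[k] UTilde η P Q →ₗ[k] UTilde η P Q}
  {p' : κ → P} {q' : κ → Q}

theorem unique {mul' : UTilde η P Q →ₗ[k] UTilde η P Q →ₗ[k] UTilde η P Q}
    (h : IsBaseChangeMul ctx η mul) (h' : IsBaseChangeMul ctx η mul') : mul = mul' := by
  refine LinearMap.ext₂ fun x y => ?_
  induction x using UTilde.induction_on with
  | zero => simp only [map_zero, LinearMap.zero_apply]
  | add x₁ x₂ h₁ h₂ => simp only [map_add, LinearMap.add_apply, h₁, h₂]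
  | mk a b u c d =>
    induction y using UTilde.induction_on with
    | zero => simp only [map_zero]
    | add y₁ y₂ h₁ h₂ => simp only [map_add, h₁, h₂]
    | mk a' b' v c' d' => rw [h, h']

theorem assoc (h : IsBaseChangeMul ctx η mul) (x y z : UTilde η P Q) :
    mul (mul x y) z = mul x (mul y z) := by
  induction x using UTilde.induction_on with
  | zero => simp only [map_zero, LinearMap.zero_apply]
  | add x₁ x₂ h₁ h₂ => simp only [map_add, LinearMap.add_apply, h₁, h₂]
  | mk a b u c d =>
    induction y using UTilde.induction_on with
    | zero => simp only [map_zero, LinearMap.zero_apply]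
    | add y₁ y₂ h₁ h₂ => simp only [map_add, LinearMap.add_apply, h₁, h₂]
    | mk a' b' v c' d' =>
      induction z using UTilde.induction_on with
      | zero => simp only [map_zero]
      | add z₁ z₂ h₁ h₂ => simp only [map_add, h₁, h₂]
      | mk a'' b'' w c'' d'' => simp only [h _ _ _ _ _ _ _ _ _ _, mul_assoc]

theorem one_mul (h : IsBaseChangeMul ctx η mul)
    (h1 : ∑ j, ctx.φ (BalTensor.tmul k R (p' j) (q' j)) = 1) (x : UTilde η P Q) :
    mul (∑ i, ∑ j, UTilde.mk η (p' j) (q' i) 1 (q' j) (p' i)) x = x := by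
  induction x using UTilde.induction_on with
  | zero => simp only [map_zero]
  | add x₁ x₂ h₁ h₂ => rw [map_add, h₁, h₂]
  | mk a b u c d =>
    simp only [map_sum, LinearMap.sum_apply, h _ _ _ _ _ _ _ _ _ _, _root_.one_mul]
    simp only [← mul_assoc, MoritaContext.η_mul_η, ← UTilde.mk_smul_left]
    rw [UTilde.sum_mk_outer η
      (fun j => op (ctx.ψ (BalTensor.tmul k S (q' j) a)) • p' j)
      (fun i => ctx.ψ (BalTensor.tmul k S b (p' i)) • q' i),
      ctx.sum_op_ψ_smul h1, ctx.sum_ψ_smul h1]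

theorem mul_one (h : IsBaseChangeMul ctx η mul)
    (h1 : ∑ j, ctx.φ (BalTensor.tmul k R (p' j) (q' j)) = 1) (x : UTilde η P Q) :
    mul x (∑ i, ∑ j, UTilde.mk η (p' j) (q' i) 1 (q' j) (p' i)) = x := by
  induction x using UTilde.induction_on with
  | zero => simp only [map_zero, LinearMap.zero_apply]
  | add x₁ x₂ h₁ h₂ => rw [map_add, LinearMap.add_apply, h₁, h₂]
  | mk a b u c d =>
    simp only [map_sum, h _ _ _ _ _ _ _ _ _ _, _root_.mul_one]
    simp only [mul_assoc, MoritaContext.η_mul_η, ← UTilde.mk_smul_right]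
    rw [UTilde.sum_mk_inner η a b u
      (fun j => ctx.ψ (BalTensor.tmul k S c (p' j)) • q' j)
      (fun i => op (ctx.ψ (BalTensor.tmul k S (q' i) d)) • p' i),
      ctx.sum_op_ψ_smul h1, ctx.sum_ψ_smul h1]

end IsBaseChangeMul

theorem baseChangeUnit_mul {ctx : MoritaContext k R S P Q} {η : R ⊗[k] Rᵐᵒᵖ →ₐ[k] U}
    {mul : UTilde η P Q →ₗ[k] UTilde η P Q →ₗ[k] UTilde η P Q} (h : IsBaseChangeMul ctx η mul)
    {p' : κ → P} {q' : κ → Q} (h1 : ∑ j, ctx.φ (BalTensor.tmul k R (p' j) (q' j)) = 1) (x y : S ⊗[k] Sᵐᵒᵖ) :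
    baseChangeUnit η p' q' (x * y) =
      mul (baseChangeUnit η p' q' x) (baseChangeUnit η p' q' y) := by
  induction x with
  | zero => simp only [zero_mul, map_zero, LinearMap.zero_apply]
  | add x₁ x₂ h₁ h₂ => simp only [add_mul, map_add, LinearMap.add_apply, h₁, h₂]
  | tmul s s' =>
    induction y with
    | zero => simp only [mul_zero, map_zero]
    | add y₁ y₂ h₁ h₂ => simp only [mul_add, map_add, h₁, h₂]
    | tmul t t' =>
      obtain ⟨s', rfl⟩ := op_surjective s'
      obtain ⟨t', rfl⟩ := op_surjective t'
      have key (i j m l : κ) :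
          mul (UTilde.mk η (s • p' j) (q' i) 1 (q' j) (s' • p' i))
            (UTilde.mk η (t • p' l) (q' m) 1 (q' l) (t' • p' m)) =
          UTilde.mk η (s • op (ctx.ψ (BalTensor.tmul k S (q' j) (t • p' l))) • p' j) (q' i) 1
            (q' l) (t' • op (ctx.ψ (BalTensor.tmul k S (q' m) (s' • p' i))) • p' m) := by
        rw [h, one_mul, mul_one]
        have hl := UTilde.mk_smul_left η (ctx.ψ (BalTensor.tmul k S (q' j) (t • p' l))) 1
          (s • p' j) (q' i) 1 (q' l)
          (op (ctx.ψ (BalTensor.tmul k S (q' m) (s' • p' i))) • t' • p' m)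
        have hr := UTilde.mk_smul_right η 1 (ctx.ψ (BalTensor.tmul k S (q' m) (s' • p' i)))
          (s • p' j) (q' i) (η (ctx.ψ (BalTensor.tmul k S (q' j) (t • p' l)) ⊗ₜ[k] op 1))
          (q' l) (t' • p' m)
        rw [one_smul, mul_one] at hl
        rw [one_smul] at hr
        rw [smul_comm s, smul_comm t', hl, hr, op_one]
      rw [Algebra.TensorProduct.tmul_mul_tmul, ← op_mul]
      rw [baseChangeUnit_tmul, baseChangeUnit_tmul, baseChangeUnit_tmul η p' q' t t',
        Finset.sum_comm (f := fun m l => UTilde.mk η (t • p' l) (q' m) 1 (q' l) (t' • p' m)),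
        map_sum mul, LinearMap.sum_apply]
      refine Finset.sum_congr rfl fun i _ => ?_
      rw [map_sum]
      refine Finset.sum_congr rfl fun l _ => ?_
      simp only [map_sum, LinearMap.sum_apply, key]
      rw [UTilde.sum_mk_mid η
        (fun j => s • op (ctx.ψ (BalTensor.tmul k S (q' j) (t • p' l))) • p' j) _ _ _
        (fun m => t' • op (ctx.ψ (BalTensor.tmul k S (q' m) (s' • p' i))) • p' m),
        ← Finset.smul_sum, ← Finset.smul_sum, ctx.sum_op_ψ_smul h1, ctx.sum_op_ψ_smul h1,
        smul_smul, smul_smul]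

end MoritaBaseChangeProof

theorem morita_base_change_ring
    {k R S U P Q : Type*} [CommRing k] [Ring R] [Ring S] [Algebra k R] [Algebra k S]
    [Ring U] [Algebra k U]
    [AddCommGroup P] [Module k P] [Module S P] [Module Rᵐᵒᵖ P]
    [SMulCommClass S Rᵐᵒᵖ P] [IsScalarTower k S P] [IsScalarTower k Rᵐᵒᵖ P]
    [AddCommGroup Q] [Module k Q] [Module R Q] [Module Sᵐᵒᵖ Q]
    [SMulCommClass R Sᵐᵒᵖ Q] [IsScalarTower k R Q] [IsScalarTower k Sᵐᵒᵖ Q]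
    (ctx : MoritaContext k R S P Q)
    {κ : Type*} [Fintype κ] (p' : κ → P) (q' : κ → Q)
    (h1 : ∑ j, ctx.φ (BalTensor.tmul k R (p' j) (q' j)) = 1)
    (η : R ⊗[k] Rᵐᵒᵖ →ₐ[k] U) :
    -- the formula gives a well-defined `k`-bilinear multiplication on `Ũ`
    (∃! mul : UTilde η P Q →ₗ[k] UTilde η P Q →ₗ[k] UTilde η P Q, IsBaseChangeMul ctx η mul) ∧
    ∀ mul : UTilde η P Q →ₗ[k] UTilde η P Q →ₗ[k] UTilde η P Q, IsBaseChangeMul ctx η mul →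
      -- it is associative
      (∀ x y z, mul (mul x y) z = mul x (mul y z)) ∧
      -- it has the stated two-sided unit
      (∀ x, mul (∑ i, ∑ j, UTilde.mk η (p' j) (q' i) 1 (q' j) (p' i)) x = x ∧
        mul x (∑ i, ∑ j, UTilde.mk η (p' j) (q' i) 1 (q' j) (p' i)) = x) ∧
      -- `η̃` is well defined, `k`-linear, multiplicative and unital
      ∃ ηt : S ⊗[k] Sᵐᵒᵖ →ₗ[k] UTilde η P Q,
        (∀ s s' : S, ηt (s ⊗ₜ[k] op s') =
          ∑ i, ∑ j, UTilde.mk η (s • p' j) (q' i) 1 (q' j) (s' • p' i)) ∧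
        (∀ a b : S ⊗[k] Sᵐᵒᵖ, ηt (a * b) = mul (ηt a) (ηt b)) ∧
        ηt 1 = ∑ i, ∑ j, UTilde.mk η (p' j) (q' i) 1 (q' j) (p' i) := by
  refine ⟨⟨ctx.baseChangeMul η, ctx.isBaseChangeMul_baseChangeMul η,
    fun mul h => h.unique (ctx.isBaseChangeMul_baseChangeMul η)⟩, fun mul h =>
    ⟨h.assoc, fun x => ⟨h.one_mul h1 x, h.mul_one h1 x⟩, baseChangeUnit η p' q',
      baseChangeUnit_tmul η p' q', baseChangeUnit_mul h h1, ?_⟩⟩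
  rw [Algebra.TensorProduct.one_def, ← op_one, baseChangeUnit_tmul]
  simp only [one_smul]
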